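/- arXiv:2510.13469 — 2 statements merged into one kernel-verified Lean document; each statement's English description precedes it below -/
import Mathlib

section
/- Assume σ ≡ 1 (mod 2) and N_{Z/ℚ}(η) ≡ 1 (mod 2). Then for every integer i with 1 ≤ i ≤ n−1, the matrix U^i·D(η) satisfies (U^i·D(η))^{n+1} − U^i·D(η) ∈ 2·M_n(O_Z); hence, setting W = (U^i·D(η))^{(n+1)/2} (note n+1 is even since n is odd), U^i·D(η) is congruent to the square W² modulo 2·M_n(O_Z). -/
set_option synthInstance.maxHeartbeats 1000000

noncomputable section

/-- `ζ = e^{2πi/p}`, a primitive `p`-th root of unity in `ℂ`. -/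
def zetaC (p : ℕ) : ℂ := Complex.exp (2 * Real.pi * Complex.I / p)

/-- The Gaussian period `η_s = ∑_{r=0}^{h-1} ζ^{g^{nr+s}}`. -/
def gaussPeriod (n p h g : ℕ) (s : ℕ) : ℂ :=
  ∑ r ∈ Finset.range h, zetaC p ^ (g ^ (n * r + s))

/-- `Z = ℚ(η)`, the subfield of `ℂ` generated over `ℚ` by the Gaussian period `η = η₀`. -/
def Zf (n p h g : ℕ) : IntermediateField ℚ ℂ :=
  IntermediateField.adjoin ℚ {gaussPeriod n p h g 0}

/-- `η` as an element of `Z = ℚ(η)`. -/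
def etaZ (n p h g : ℕ) : Zf n p h g :=
  ⟨gaussPeriod n p h g 0, IntermediateField.subset_adjoin ℚ _ rfl⟩

/-- `D(z) = diag(z, S(z), …, S^{n-1}(z))` in `M_n(Z)`. -/
def Dm (n p h g : ℕ) (S : Zf n p h g ≃ₐ[ℚ] Zf n p h g) (z : Zf n p h g) :
    Matrix (Fin n) (Fin n) (Zf n p h g) :=
  Matrix.diagonal fun i => (S ^ (i : ℕ)) z

/-- The matrix `U` with `U_{i+1,i} = 1`, `U_{1,n} = σ`, and `0` elsewhere
(indices written `0`-based), for an integer `σ`. -/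
def Um (n p h g : ℕ) (σ : ℤ) : Matrix (Fin n) (Fin n) (Zf n p h g) :=
  Matrix.of fun i j =>
    if (i : ℕ) = (j : ℕ) + 1 then 1
    else if (i : ℕ) = 0 ∧ (j : ℕ) = n - 1 then (σ : Zf n p h g) else 0

theorem zetaC_prim (p : ℕ) (hp : p.Prime) : IsPrimitiveRoot (zetaC p) p :=
  Complex.isPrimitiveRoot_exp p hp.ne_zero

theorem g_pow_one (p g : ℕ) (hg : orderOf (g : ZMod p) = p - 1) :
    (g : ZMod p) ^ (p - 1) = 1 := by
  rw [← hg]; exact pow_orderOf_eq_one _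

theorem zeta_pow_congr (p : ℕ) (hp : p.Prime) (a b : ℕ) (hab : (a : ZMod p) = b) :
    zetaC p ^ a = zetaC p ^ b := by
  have h1 := (zetaC_prim p hp).pow_eq_one
  rw [ZMod.natCast_eq_natCast_iff] at hab
  rw [← pow_mod_orderOf, ← pow_mod_orderOf _ b, ← (zetaC_prim p hp).eq_orderOf]
  rw [hab]

theorem gaussPeriod_n (n p h g : ℕ) (hp : p.Prime) (hph : p = n * h + 1)
    (hg : orderOf (g : ZMod p) = p - 1) : gaussPeriod n p h g n = gaussPeriod n p h g 0 := by
  unfold gaussPeriod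
  have h1 := Finset.sum_range_succ' (fun r => zetaC p ^ (g ^ (n * r))) h
  have h2 := Finset.sum_range_succ (fun r => zetaC p ^ (g ^ (n * r))) h
  have h3 : zetaC p ^ (g ^ (n * h)) = zetaC p ^ (g ^ (n * 0)) := by
    apply zeta_pow_congr p hp
    have := g_pow_one p g hg
    have e : p - 1 = n * h := by omega
    rw [e] at this
    push_cast
    simp [this]
  rw [h3] at h2
  have := h1.symm.trans h2
  simpa [mul_add] using this

theorem gaussPeriod_int (n p h g s : ℕ) (hp : p.Prime) :
    IsIntegral ℤ (gaussPeriod n p h g s) := by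
  unfold gaussPeriod
  apply IsIntegral.sum
  intro r _
  exact ((zetaC_prim p hp).isIntegral hp.pos).pow _

theorem exists_pow (p g : ℕ) (hp : p.Prime) (hg : orderOf (g : ZMod p) = p - 1)
    (a : ZMod p) (ha : a ≠ 0) : ∃ s : ℕ, a = (g : ZMod p) ^ s := by
  have : Fact p.Prime := ⟨hp⟩
  have h0 : (g : ZMod p) ≠ 0 := by
    intro h0
    have := g_pow_one p g hg
    rw [h0] at this
    by_cases hp1 : p - 1 = 0
    · have := hp.two_le; omega
    · simp [zero_pow hp1] at this
  let u : (ZMod p)ˣ := Units.mk0 _ h0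
  have hu : orderOf u = p - 1 := by
    rw [← hg, ← orderOf_units]; rfl
  have hall : Subgroup.zpowers u = ⊤ := by
    apply Subgroup.eq_top_of_card_eq
    rw [Nat.card_zpowers, hu, Nat.card_eq_fintype_card, ZMod.card_units]
  have hm : Units.mk0 a ha ∈ Subgroup.zpowers u := by rw [hall]; trivial
  rw [← mem_powers_iff_mem_zpowers] at hm
  obtain ⟨s, hs⟩ := hm
  refine ⟨s, ?_⟩
  have := congrArg Units.val hs
  simpa [u] using this.symm

theorem gal_main (n p h g : ℕ) (hp : p.Prime) (hg : orderOf (g : ZMod p) = p - 1) :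
    IsGalois ℚ (Zf n p h g) ∧ FiniteDimensional ℚ (Zf n p h g) ∧
    ∀ τ : Zf n p h g ≃ₐ[ℚ] Zf n p h g, ∃ s : ℕ,
      ((τ (etaZ n p h g) : Zf n p h g) : ℂ) = gaussPeriod n p h g s := by
  have : NeZero p := ⟨hp.ne_zero⟩
  have hζ := zetaC_prim p hp
  let C := IntermediateField.adjoin ℚ {zetaC p}
  have hC : IsCyclotomicExtension {p} ℚ C := by
    change IsCyclotomicExtension {p} ℚ (IntermediateField.adjoin ℚ {zetaC p}).toSubalgebra
    rw [IntermediateField.adjoin_simple_toSubalgebra_of_isAlgebraic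
      ((hζ.isIntegral hp.pos).tower_top (A := ℚ)).isAlgebraic]
    exact hζ.adjoin_isCyclotomicExtension ℚ
  have hz : zetaC p ∈ C := IntermediateField.subset_adjoin ℚ _ rfl
  have hle : Zf n p h g ≤ C := by
    unfold Zf
    rw [IntermediateField.adjoin_simple_le_iff]
    exact sum_mem fun r _ => pow_mem hz _
  have : FiniteDimensional ℚ C := IsCyclotomicExtension.finiteDimensional {p} ℚ C
  have hAb : IsAbelianGalois ℚ C := IsCyclotomicExtension.isAbelianGalois {p} ℚ C
  let : Algebra (Zf n p h g) C := (IntermediateField.inclusion hle).toRingHom.toAlgebra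
  have : IsScalarTower ℚ (Zf n p h g) C := IsScalarTower.of_algebraMap_eq' rfl
  refine ⟨(@IsAbelianGalois.of_algHom ℚ (Zf n p h g) C _ _ _ _ _ (IntermediateField.inclusion hle) hAb).toIsGalois,
    FiniteDimensional.of_injective (IntermediateField.inclusion hle).toLinearMap
      (IntermediateField.inclusion hle).injective, ?_⟩
  intro τ
  let T := τ.liftNormal C
  have hT : ∀ x, (T (algebraMap _ C x)) = algebraMap _ C (τ x) := τ.liftNormal_commutes C
  let z : C := ⟨zetaC p, hz⟩
  have hzp : IsPrimitiveRoot z p := by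
    apply IsPrimitiveRoot.of_map_of_injective (f := C.val) _ C.val.injective
    exact hζ
  have hTz : IsPrimitiveRoot (T z) p := hzp.map_of_injective T.injective
  obtain ⟨a, ha, hco, hTa⟩ := (hzp.isPrimitiveRoot_iff).1 hTz
  have ha0 : (a : ZMod p) ≠ 0 := by
    intro h0
    rw [ZMod.natCast_eq_zero_iff] at h0
    exact hp.one_lt.ne' (Nat.eq_one_of_dvd_coprimes hco h0 dvd_rfl)
  obtain ⟨s, hs⟩ := exists_pow p g hp hg _ ha0
  refine ⟨s, ?_⟩
  have h1 : ((τ (etaZ n p h g) : Zf n p h g) : ℂ) = (T (algebraMap _ C (etaZ n p h g)) : C) := by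
    rw [hT]; rfl
  have h2 : algebraMap _ C (etaZ n p h g) = ∑ r ∈ Finset.range h, z ^ (g ^ (n * r + 0)) := by
    apply Subtype.ext
    rw [AddSubmonoidClass.coe_finsetSum]
    rfl
  rw [h1, h2, map_sum, AddSubmonoidClass.coe_finsetSum]
  unfold gaussPeriod
  refine Finset.sum_congr rfl fun r _ => ?_
  rw [map_pow, ← hTa]
  change (zetaC p ^ a) ^ _ = _
  rw [← pow_mul]
  apply zeta_pow_congr p hp
  push_cast
  rw [hs, ← pow_add]; congr 1; omega

theorem Zf_ext (n p h g : ℕ) (σ τ : Zf n p h g ≃ₐ[ℚ] Zf n p h g)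
    (hh : σ (etaZ n p h g) = τ (etaZ n p h g)) : σ = τ := by
  have : (σ : Zf n p h g →ₐ[ℚ] Zf n p h g) = (τ : Zf n p h g →ₐ[ℚ] Zf n p h g) := by
    apply IntermediateField.algHom_ext_of_eq_adjoin ℚ (S := Zf n p h g) (s := {gaussPeriod n p h g 0}) rfl
    intro x hx
    obtain rfl : x = gaussPeriod n p h g 0 := hx
    exact hh
  ext1 x
  exact DFunLike.congr_fun this x

theorem norm_pow_prod (n p h g : ℕ) (hn : n.Prime)
    (hp : p.Prime) (hph : p = n * h + 1) (hg : orderOf (g : ZMod p) = p - 1)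
    (S : Zf n p h g ≃ₐ[ℚ] Zf n p h g)
    (hS : ∀ s : ℕ, (((S ^ s) (etaZ n p h g) : Zf n p h g) : ℂ) = gaussPeriod n p h g s)
    (i : ℕ) (hi1 : 1 ≤ i) (hi2 : i ≤ n - 1) :
    S ^ n = 1 ∧ ∃ k : ℕ, ∏ j ∈ Finset.range n, ((S ^ i) ^ j) (etaZ n p h g) =
      algebraMap ℚ _ (Algebra.norm ℚ (etaZ n p h g)) ^ k := by
  obtain ⟨hG, hF, hτ⟩ := gal_main n p h g hp hg
  have hSn : S ^ n = 1 := by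
    apply Zf_ext
    apply Subtype.ext
    rw [hS, gaussPeriod_n n p h g hp hph hg]; rfl
  refine ⟨hSn, ?_⟩
  have hall : ∀ τ : Zf n p h g ≃ₐ[ℚ] Zf n p h g, ∃ s : ℕ, τ = S ^ s := by
    intro τ
    obtain ⟨s, hs⟩ := hτ τ
    refine ⟨s, Zf_ext _ _ _ _ _ _ (Subtype.ext ?_)⟩
    rw [hs, hS]
  rw [Algebra.norm_eq_prod_automorphisms]
  rcases (Nat.dvd_prime hn).1 (orderOf_dvd_of_pow_eq_one hSn) with h1 | h1
  · rw [orderOf_eq_one_iff] at h1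
    subst h1
    have huniq : ∀ τ : Zf n p h g ≃ₐ[ℚ] Zf n p h g, τ = 1 := by
      intro τ; obtain ⟨s, rfl⟩ := hall τ; simp
    refine ⟨n, ?_⟩
    rw [Fintype.prod_eq_single (1 : Zf n p h g ≃ₐ[ℚ] Zf n p h g) (fun τ hτ => absurd (huniq τ) hτ)]
    simp
  · have hco : Nat.Coprime n i := by
      rw [hn.coprime_iff_not_dvd]
      intro hd
      have := Nat.le_of_dvd (by omega) hd
      have := hn.two_le
      omega
    have hT : orderOf (S ^ i) = n := by
      rw [Nat.Coprime.orderOf_pow (by rw [h1]; exact hco), h1]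
    refine ⟨1, ?_⟩
    rw [pow_one]
    refine Finset.prod_bij (fun j _ => (S ^ i) ^ j) (fun _ _ => Finset.mem_univ _) ?_ ?_ (fun _ _ => rfl)
    · intro a ha b hb hab
      rw [Finset.mem_range] at ha hb
      exact pow_injOn_Iio_orderOf (by simpa [hT] using ha) (by simpa [hT] using hb) hab
    · intro τ _
      obtain ⟨s, rfl⟩ := hall τ
      have h2 : S ∈ Subgroup.zpowers (S ^ i) := by
        have h3 : Subgroup.zpowers (S ^ i) = Subgroup.zpowers S := by
          apply Subgroup.eq_of_le_of_card_ge
          · rw [Subgroup.zpowers_le]; exact Subgroup.npow_mem_zpowers S i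
          · rw [Nat.card_zpowers, Nat.card_zpowers, hT, h1]
        rw [h3]; exact Subgroup.mem_zpowers S
      have h3 := pow_mem h2 s
      classical
      have hfin : IsOfFinOrder (S ^ i) := isOfFinOrder_of_finite _
      rw [← hfin.mem_powers_iff_mem_zpowers, hfin.mem_powers_iff_mem_range_orderOf, hT] at h3
      simp only [Finset.mem_image, Finset.mem_range] at h3
      obtain ⟨j, hj, hj'⟩ := h3
      exact ⟨j, Finset.mem_range.2 hj, hj'⟩

theorem Um_pow (n p h g : ℕ) (σ : ℤ) (k : ℕ) (hk : k ≤ n) (a b : Fin n) :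
    (Um n p h g σ ^ k) a b =
      if (a : ℕ) = b + k then 1 else if (a : ℕ) + n = b + k then (σ : Zf n p h g) else 0 := by
  induction k generalizing a b with
  | zero =>
    rw [pow_zero, Matrix.one_apply]
    have := a.2
    have := b.2
    by_cases hab : a = b
    · simp [hab]
    · have h1 : (a : ℕ) ≠ b := fun h => hab (Fin.ext h)
      have h2 : (a : ℕ) + n ≠ b := by omega
      simp [hab, h1, h2]
  | succ k ih =>
    have ha := a.2
    have hb := b.2
    rw [pow_succ', Matrix.mul_apply]
    by_cases h0 : (a : ℕ) = 0
    · rw [Finset.sum_eq_single (⟨n - 1, by omega⟩ : Fin n)]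
      · rw [ih (by omega)]
        have e1 : (Um n p h g σ) a ⟨n - 1, by omega⟩ = σ := by simp [Um, h0]
        rw [e1]
        have c1 : ((a : ℕ) = b + (k + 1)) = False := by simp; omega
        have c2 : ((n - 1 : ℕ) = b + k) = ((a : ℕ) + n = b + (k + 1)) := by
          apply propext; omega
        have c3 : ((n - 1 : ℕ) + n = b + k) = False := by simp; omega
        simp only [c1, c2, c3, if_false]
        split_ifs <;> simp
      · intro c _ hc
        have hc' : (c : ℕ) ≠ n - 1 := fun h => hc (Fin.ext h)
        simp [Um, h0, hc']
      · simp
    · rw [Finset.sum_eq_single (⟨a - 1, by omega⟩ : Fin n)]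
      · rw [ih (by omega)]
        have e1 : (Um n p h g σ) a ⟨a - 1, by omega⟩ = 1 := by
          have : (a : ℕ) = a - 1 + 1 := by omega
          simp [Um, ← this]
        rw [e1, one_mul]
        have c1 : ((a - 1 : ℕ) = b + k) = ((a : ℕ) = b + (k + 1)) := by
          apply propext; omega
        have c2 : ((a - 1 : ℕ) + n = b + k) = ((a : ℕ) + n = b + (k + 1)) := by
          apply propext; omega
        simp only [c1, c2]
      · intro c _ hc
        have hc' : (a : ℕ) ≠ c + 1 := fun h => hc (Fin.ext (by simp [h]))
        simp [Um, h0, hc']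
      · simp

theorem Um_pow_n (n p h g : ℕ) (σ : ℤ) :
    Um n p h g σ ^ n = (σ : Zf n p h g) • 1 := by
  ext a b
  rw [Um_pow _ _ _ _ _ _ le_rfl, Matrix.smul_apply, Matrix.one_apply]
  have ha := a.2
  have h1 : (a : ℕ) ≠ b + n := by omega
  by_cases hab : a = b
  · subst hab; rw [if_neg h1]; simp
  · have h2 : (a : ℕ) ≠ b := fun h => hab (Fin.ext h)
    simp [h1, h2, hab]

theorem Dm_mul_Um (n p h g : ℕ) (σ : ℤ) (S : Zf n p h g ≃ₐ[ℚ] Zf n p h g) (hSn : S ^ n = 1)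
    (z : Zf n p h g) :
    Dm n p h g S z * Um n p h g σ = Um n p h g σ * Dm n p h g S (S z) := by
  ext a b
  have ha := a.2
  have hb := b.2
  rw [Dm, Dm, Matrix.diagonal_mul, Matrix.mul_diagonal, ← AlgEquiv.mul_apply, ← pow_succ]
  simp only [Um, Matrix.of_apply]
  by_cases h1 : (a : ℕ) = b + 1
  · rw [if_pos h1, h1]; simp
  · rw [if_neg h1]
    by_cases h2 : (a : ℕ) = 0 ∧ (b : ℕ) = n - 1
    · have h3 : (b : ℕ) + 1 = n := by omega
      rw [if_pos h2, h2.1, h3, hSn, pow_zero, mul_comm]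
    · rw [if_neg h2]; simp

theorem Dm_mul_Um_pow (n p h g : ℕ) (σ : ℤ) (S : Zf n p h g ≃ₐ[ℚ] Zf n p h g) (hSn : S ^ n = 1)
    (i : ℕ) (z : Zf n p h g) :
    Dm n p h g S z * Um n p h g σ ^ i = Um n p h g σ ^ i * Dm n p h g S ((S ^ i) z) := by
  induction i generalizing z with
  | zero => simp
  | succ i ih =>
    rw [pow_succ', ← mul_assoc, Dm_mul_Um _ _ _ _ _ _ hSn, mul_assoc, ih, ← mul_assoc,
      ← AlgEquiv.mul_apply, ← pow_succ]

theorem Dm_mul (n p h g : ℕ) (S : Zf n p h g ≃ₐ[ℚ] Zf n p h g) (z w : Zf n p h g) :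
    Dm n p h g S z * Dm n p h g S w = Dm n p h g S (z * w) := by
  simp [Dm, Matrix.diagonal_mul_diagonal]

theorem A_pow (n p h g : ℕ) (σ : ℤ) (S : Zf n p h g ≃ₐ[ℚ] Zf n p h g) (hSn : S ^ n = 1)
    (i k : ℕ) (z : Zf n p h g) :
    (Um n p h g σ ^ i * Dm n p h g S z) ^ k =
      (Um n p h g σ ^ i) ^ k * Dm n p h g S (∏ j ∈ Finset.range k, ((S ^ i) ^ j) z) := by
  induction k with
  | zero => simp [Dm]
  | succ k ih =>
    rw [pow_succ, ih, mul_assoc, ← mul_assoc (Dm n p h g S _), Dm_mul_Um_pow _ _ _ _ _ _ hSn,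
      mul_assoc, Dm_mul, ← mul_assoc, ← pow_succ, Finset.prod_range_succ']
    congr 2
    rw [map_prod]
    congr 1
    refine Finset.prod_congr rfl fun j _ => ?_
    rw [← AlgEquiv.mul_apply, ← pow_succ']

theorem A_int (n p h g : ℕ) (σ : ℤ) (hp : p.Prime) (S : Zf n p h g ≃ₐ[ℚ] Zf n p h g)
    (hS : ∀ s : ℕ, (((S ^ s) (etaZ n p h g) : Zf n p h g) : ℂ) = gaussPeriod n p h g s)
    (i : ℕ) (hi : i ≤ n) (a b : Fin n) :
    IsIntegral ℤ ((Um n p h g σ ^ i * Dm n p h g S (etaZ n p h g)) a b) := by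
  rw [Dm, Matrix.mul_diagonal, Um_pow _ _ _ _ _ _ hi]
  apply IsIntegral.mul
  · split_ifs
    · exact isIntegral_one
    · exact isIntegral_algebraMap (R := ℤ) (x := σ)
    · exact isIntegral_zero
  · have := gaussPeriod_int n p h g b hp
    rw [← hS] at this
    have hinj : Function.Injective ((Zf n p h g).val.restrictScalars ℤ) := Subtype.val_injective
    exact (isIntegral_algHom_iff ((Zf n p h g).val.restrictScalars ℤ) hinj).1 this

/-- If `σ ≡ 1 (mod 2)` and `N_{Z/ℚ}(η) ≡ 1 (mod 2)`, then for
`1 ≤ i ≤ n-1` one has `(U^i·D(η))^{n+1} − U^i·D(η) ∈ 2·M_n(O_Z)`; hence, with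
`W = (U^i·D(η))^{(n+1)/2}`, the matrix `U^i·D(η)` is congruent to `W²` modulo
`2·M_n(O_Z)`. -/
theorem U_pow_mul_D_eta_congr_square_mod_two
    (n p h g : ℕ) (σ : ℤ)
    (hn : n.Prime) (hnodd : Odd n)
    (hp : p.Prime)
    (hph : p = n * h + 1)
    (hg : orderOf (g : ZMod p) = p - 1)
    (S : Zf n p h g ≃ₐ[ℚ] Zf n p h g)
    (hS : ∀ s : ℕ, (((S ^ s) (etaZ n p h g) : Zf n p h g) : ℂ) = gaussPeriod n p h g s)
    (hσodd : σ % 2 = 1)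
    (hnorm : ∃ N : ℤ, Odd N ∧ Algebra.norm ℚ (etaZ n p h g) = (N : ℚ))
    (i : ℕ) (hi1 : 1 ≤ i) (hi2 : i ≤ n - 1) :
    (∃ M : Matrix (Fin n) (Fin n) (Zf n p h g),
      (∀ a b, IsIntegral ℤ (M a b)) ∧
      (Um n p h g σ ^ i * Dm n p h g S (etaZ n p h g)) ^ (n + 1) -
        Um n p h g σ ^ i * Dm n p h g S (etaZ n p h g) = 2 • M) ∧
    (∃ M : Matrix (Fin n) (Fin n) (Zf n p h g),
      (∀ a b, IsIntegral ℤ (M a b)) ∧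
      Um n p h g σ ^ i * Dm n p h g S (etaZ n p h g) -
        ((Um n p h g σ ^ i * Dm n p h g S (etaZ n p h g)) ^ ((n + 1) / 2)) ^ 2 = 2 • M) := by
  obtain ⟨N, hN, hNn⟩ := hnorm
  obtain ⟨hSn, k, hk⟩ := norm_pow_prod n p h g hn hp hph hg S hS i hi1 hi2
  set A := Um n p h g σ ^ i * Dm n p h g S (etaZ n p h g) with hA
  have hAint : ∀ a b, IsIntegral ℤ (A a b) :=
    A_int n p h g σ hp S hS i (by omega)
  have hodd : Odd (σ ^ i * N ^ k) := ((Int.odd_iff.2 hσodd).pow).mul hN.pow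
  obtain ⟨m, hm⟩ := hodd
  have hAn : A ^ n = ((2 * m + 1 : ℤ) : Zf n p h g) • 1 := by
    rw [hA, A_pow _ _ _ _ _ _ hSn, hk, hNn, ← pow_mul, mul_comm i n, pow_mul, Um_pow_n, ← hm]
    have hD : ∀ c : ℕ, (S ^ c) ((algebraMap ℚ (Zf n p h g)) (N : ℚ) ^ k) = (N : Zf n p h g) ^ k := by
      intro c
      rw [map_pow, map_intCast, map_intCast]
    ext a b
    simp only [Dm, hD, smul_pow]
    simp [Matrix.one_apply]
  have key : A ^ (n + 1) - A = 2 • ((m : Zf n p h g) • A) := by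
    rw [pow_succ, hAn]
    ext a b
    simp
    ring
  have hint : ∀ a b, IsIntegral ℤ (((m : Zf n p h g) • A) a b) := by
    intro a b
    rw [Matrix.smul_apply, smul_eq_mul]
    exact (isIntegral_algebraMap (R := ℤ) (x := m)).mul (hAint a b)
  refine ⟨⟨_, hint, key⟩, ⟨-((m : Zf n p h g) • A), fun a b => (hint a b).neg, ?_⟩⟩
  obtain ⟨r, hr⟩ := hnodd
  have e : (n + 1) / 2 * 2 = n + 1 := by omega
  rw [← pow_mul, e, smul_neg, ← key, neg_sub]

end
end

section
/- Let L = ℚ(ζ₇ + ζ₇⁻¹), with cyclic Galois group over ℚ generated by the automorphism S sending ζ₇ + ζ₇⁻¹ to ζ₇² + ζ₇⁻². In M₃(L) let D(z) = diag(z, S(z), S²(z)) for z ∈ L, and let U be the matrix with U_{2,1} = U_{3,2} = 1, U_{1,3} = 2, and 0 elsewhere (so U³ = 2·I and D(z)U = U·D(S(z))). Then the ℚ-subalgebra of M₃(L) generated by U together with all D(z), z ∈ L, is a division ring of dimension 9 over ℚ (a model of the cyclic division algebra L + uL + u²L with u³ = 2). -/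
noncomputable section

/-- `ζ₇ = e^{2πi/7}`, a primitive seventh root of unity in `ℂ`. -/
def zeta7 : ℂ := Complex.exp (2 * Real.pi * Complex.I / 7)

/-- `L = ℚ(ζ₇ + ζ₇⁻¹)`, the real subfield of `ℚ(ζ₇)` of degree 3 over `ℚ`. -/
def L7 : IntermediateField ℚ ℂ := IntermediateField.adjoin ℚ {zeta7 + zeta7⁻¹}

/-- `η = ζ₇ + ζ₇⁻¹` as an element of `L`. -/
def eta7 : L7 := ⟨zeta7 + zeta7⁻¹, IntermediateField.subset_adjoin ℚ _ rfl⟩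

theorem aux_zeta : zeta7 ^ 7 = 1 ∧ zeta7 ≠ 1 := by
  have h : IsPrimitiveRoot zeta7 7 := by
    have := Complex.isPrimitiveRoot_exp 7 (by norm_num)
    simpa [zeta7] using this
  exact ⟨h.pow_eq_one, h.ne_one (by norm_num)⟩

theorem aux_zeta_ne : zeta7 ≠ 0 := by simp [zeta7, Complex.exp_ne_zero]

theorem aux_cubic : eta7 ^ 3 + eta7 ^ 2 - 2 * eta7 - 1 = 0 := by
  apply Subtype.ext
  have h0 := aux_zeta_ne
  obtain ⟨h1, h2⟩ := aux_zeta
  have h3 : 1 + zeta7 + zeta7 ^ 2 + zeta7 ^ 3 + zeta7 ^ 4 + zeta7 ^ 5 + zeta7 ^ 6 = 0 := by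
    have : (zeta7 - 1) *
      (1 + zeta7 + zeta7 ^ 2 + zeta7 ^ 3 + zeta7 ^ 4 + zeta7 ^ 5 + zeta7 ^ 6) = 0 := by
      linear_combination h1
    exact (mul_eq_zero.mp this).resolve_left (sub_ne_zero.mpr h2)
  have : (zeta7 + zeta7⁻¹) ^ 3 + (zeta7 + zeta7⁻¹) ^ 2 - 2 * (zeta7 + zeta7⁻¹) - 1 = 0 := by
    field_simp
    linear_combination h3
  exact this

/-- integer combinations -/
def emb (p q r : ℤ) : L7 := p + q * eta7 + r * eta7 ^ 2

section
variable (S : L7 ≃ₐ[ℚ] L7) (hS : ((S eta7 : L7) : ℂ) = zeta7 ^ 2 + (zeta7 ^ 2)⁻¹)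
include hS

theorem aux_S : S eta7 = eta7 ^ 2 - 2 := by
  apply Subtype.ext
  rw [hS]
  have h0 := aux_zeta_ne
  have : zeta7 ^ 2 + (zeta7 ^ 2)⁻¹ = (zeta7 + zeta7⁻¹) ^ 2 - 2 := by
    field_simp
    ring
  exact this

theorem aux_S2 : S (S eta7) = 1 - eta7 - eta7 ^ 2 := by
  have h := aux_S S hS
  rw [h, map_sub, map_pow, h, map_ofNat]
  linear_combination (eta7 - 1) * aux_cubic

theorem aux_S3 (z : L7) : S (S (S z)) = z := by
  have h := aux_S S hS
  have h2 := aux_S2 S hS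
  have h3 : S (S (S eta7)) = eta7 := by
    rw [h2, map_sub, map_sub, map_pow, h, map_one]
    linear_combination (-eta7 + 1) * aux_cubic
  have key : ∀ w : ℂ, ∀ hw : w ∈ IntermediateField.adjoin ℚ {zeta7 + zeta7⁻¹},
      S (S (S (⟨w, hw⟩ : L7))) = (⟨w, hw⟩ : L7) := by
    intro w hw
    induction hw using IntermediateField.adjoin_induction with
    | mem x hx =>
      rw [Set.mem_singleton_iff] at hx
      subst hx
      exact h3
    | algebraMap x =>
      exact ((S.trans (S.trans S)).commutes x)
    | add x y hx hy ihx ihy =>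
      have : (⟨x + y, add_mem hx hy⟩ : L7) = (⟨x, hx⟩ : L7) + (⟨y, hy⟩ : L7) := rfl
      rw [this, map_add, map_add, map_add, ihx, ihy]
    | inv x hx ihx =>
      have : (⟨x⁻¹, inv_mem hx⟩ : L7) = (⟨x, hx⟩ : L7)⁻¹ := rfl
      rw [this, map_inv₀, map_inv₀, map_inv₀, ihx]
    | mul x y hx hy ihx ihy =>
      have : (⟨x * y, mul_mem hx hy⟩ : L7) = (⟨x, hx⟩ : L7) * (⟨y, hy⟩ : L7) := rfl
      rw [this, map_mul, map_mul, map_mul, ihx, ihy]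
  exact key z.1 z.2

theorem S_emb (p q r : ℤ) : S (emb p q r) = p + q * (eta7 ^ 2 - 2) + r * (eta7 ^ 2 - 2) ^ 2 := by
  simp only [emb, map_add, map_mul, map_pow, map_intCast, aux_S S hS]

theorem S2_emb (p q r : ℤ) : S (S (emb p q r)) =
    p + q * (1 - eta7 - eta7 ^ 2) + r * (1 - eta7 - eta7 ^ 2) ^ 2 := by
  simp only [emb, map_add, map_mul, map_pow, map_intCast, aux_S2 S hS]

theorem norm_emb (p q r : ℤ) : emb p q r * S (emb p q r) * S (S (emb p q r)) =
    ((p^3 + q^3 + r^3 - p^2*q + 5*p^2*r - 2*p*q^2 + 6*p*r^2 - p*q*r - q^2*r - 2*q*r^2 : ℤ) : L7) := by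
  rw [S2_emb S hS, S_emb S hS, emb]
  have h := aux_cubic
  push_cast
  generalize eta7 = x at *
  generalize (p : L7) = p at *
  generalize (q : L7) = q at *
  generalize (r : L7) = r at *
  grind

theorem mul_emb (p q r p' q' r' : ℤ) : ∃ a b c, emb p q r * emb p' q' r' = emb a b c := by
  have h := aux_cubic
  refine ⟨p*p' + (q*r'+r*q') - r*r', p*q'+q*p' + 2*(q*r'+r*q') - r*r',
    p*r'+q*q'+r*p' - (q*r'+r*q') + 3*(r*r'), ?_⟩
  simp only [emb]
  push_cast
  linear_combination ((q:L7)*r'+r*q' + r*r'*(eta7-1)) * aux_cubic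

theorem S_emb' (p q r : ℤ) : ∃ a b c, S (emb p q r) = emb a b c := by
  refine ⟨p - 2*q + 3*r, -r, q - r, ?_⟩
  rw [S_emb S hS]
  simp only [emb]
  push_cast
  linear_combination ((r:L7)*(eta7-1)) * aux_cubic

theorem tr_emb (p q r : ℤ) :
    ∃ t : ℤ, emb p q r + S (emb p q r) + S (S (emb p q r)) = t := by
  refine ⟨3*p - q + 5*r, ?_⟩
  rw [S2_emb S hS, S_emb S hS, emb]
  push_cast
  linear_combination (2 * (r:L7) * eta7) * aux_cubic

theorem tr3_emb (p q r p' q' r' p'' q'' r'' : ℤ) :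
    ∃ t : ℤ, emb p q r * S (emb p' q' r') * S (S (emb p'' q'' r''))
      + S (emb p q r) * S (S (emb p' q' r')) * emb p'' q'' r''
      + S (S (emb p q r)) * emb p' q' r' * S (emb p'' q'' r'') = t := by
  obtain ⟨a, b, c, h1⟩ := S_emb' S hS p' q' r'
  obtain ⟨a2, b2, c2, h2⟩ := S_emb' S hS p'' q'' r''
  obtain ⟨a3, b3, c3, h3⟩ := S_emb' S hS a2 b2 c2
  obtain ⟨a4, b4, c4, h4⟩ := mul_emb S hS p q r a b c
  obtain ⟨a5, b5, c5, h5⟩ := mul_emb S hS a4 b4 c4 a3 b3 c3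
  obtain ⟨t, ht⟩ := tr_emb S hS a5 b5 c5
  refine ⟨t, ?_⟩
  rw [← ht, ← h5, ← h4, ← h3, ← h2, ← h1]
  simp only [map_mul, aux_S3 S hS]

end

/-- reduced norm form -/
def nrd (S : L7 ≃ₐ[ℚ] L7) (a b c : L7) : L7 :=
  a * S a * S (S a) + 2 * (b * S b * S (S b)) + 4 * (c * S c * S (S c))
   - 2 * (a * S b * S (S c) + S a * S (S b) * c + S (S a) * b * S c)

theorem parity (p q r m : ℤ) (h : p^3 + q^3 + r^3 - p^2*q + 5*p^2*r - 2*p*q^2 + 6*p*r^2 - p*q*r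
    - q^2*r - 2*q*r^2 = 2 * m) : (∃ p', p = 2 * p') ∧ (∃ q', q = 2 * q') ∧ (∃ r', r = 2 * r') := by
  have key : ∀ p q r : ZMod 2, p^3 + q^3 + r^3 - p^2*q + 5*p^2*r - 2*p*q^2 + 6*p*r^2 - p*q*r
    - q^2*r - 2*q*r^2 = 0 → p = 0 ∧ q = 0 ∧ r = 0 := by decide
  have h' := congrArg (Int.cast : ℤ → ZMod 2) h
  push_cast at h'
  rw [show (2 : ZMod 2) * m = 0 by
    rw [show (2 : ZMod 2) = 0 from rfl, zero_mul]] at h'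
  obtain ⟨h1, h2, h3⟩ := key _ _ _ h'
  exact ⟨(ZMod.intCast_zmod_eq_zero_iff_dvd p 2).mp h1, (ZMod.intCast_zmod_eq_zero_iff_dvd q 2).mp h2,
    (ZMod.intCast_zmod_eq_zero_iff_dvd r 2).mp h3⟩

theorem emb_two (p q r : ℤ) : emb (2 * p) (2 * q) (2 * r) = 2 * emb p q r := by
  simp only [emb]; push_cast; ring

section
variable (S : L7 ≃ₐ[ℚ] L7) (hS : ((S eta7 : L7) : ℂ) = zeta7 ^ 2 + (zeta7 ^ 2)⁻¹)
include hS

theorem norm_emb' (p q r : ℤ) : ∃ t : ℤ, emb p q r * S (emb p q r) * S (S (emb p q r)) = t ∧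
    ∀ m, t = 2 * m → (∃ p', p = 2 * p') ∧ (∃ q', q = 2 * q') ∧ (∃ r', r = 2 * r') :=
  ⟨_, norm_emb S hS p q r, fun m hm => parity p q r m hm⟩

theorem descent (n : ℕ) : ∀ p q r p' q' r' p'' q'' r'' : ℤ,
    nrd S (emb p q r) (emb p' q' r') (emb p'' q'' r'') = 0 →
    (2 ^ n ∣ p ∧ 2 ^ n ∣ q ∧ 2 ^ n ∣ r) ∧ (2 ^ n ∣ p' ∧ 2 ^ n ∣ q' ∧ 2 ^ n ∣ r') ∧
    (2 ^ n ∣ p'' ∧ 2 ^ n ∣ q'' ∧ 2 ^ n ∣ r'') := by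
  induction n with
  | zero => intros; simp
  | succ n ih =>
    intro p q r p' q' r' p'' q'' r'' h
    obtain ⟨u, hu, hu'⟩ := norm_emb' S hS p q r
    obtain ⟨v, hv, hv'⟩ := norm_emb' S hS p' q' r'
    obtain ⟨w, hw, hw'⟩ := norm_emb' S hS p'' q'' r''
    obtain ⟨t, ht⟩ := tr3_emb S hS p q r p' q' r' p'' q'' r''
    have h1 : u + 2 * v + 4 * w - 2 * t = 0 := by
      have h1 := h
      rw [nrd, hu, hv, hw, ht] at h1
      exact_mod_cast h1
    obtain ⟨⟨p, rfl⟩, ⟨q, rfl⟩, ⟨r, rfl⟩⟩ := hu' (t - v - 2 * w) (by omega)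
    clear hu'
    obtain ⟨u0, hu0, -⟩ := norm_emb' S hS p q r
    obtain ⟨t0, ht0⟩ := tr3_emb S hS p q r p' q' r' p'' q'' r''
    have h2 : 8 * u0 + 2 * v + 4 * w - 4 * t0 = 0 := by
      have h1 := h
      rw [nrd, hv, hw] at h1
      simp only [emb_two, map_mul, map_ofNat] at h1
      have : 8 * (u0 : L7) + 2 * v + 4 * w - 4 * t0 = 0 := by
        rw [← hu0, ← ht0]; linear_combination h1
      exact_mod_cast this
    obtain ⟨⟨p', rfl⟩, ⟨q', rfl⟩, ⟨r', rfl⟩⟩ := hv' (t0 - w - 2 * u0) (by omega)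
    clear hv'
    obtain ⟨v0, hv0, -⟩ := norm_emb' S hS p' q' r'
    obtain ⟨t1, ht1⟩ := tr3_emb S hS p q r p' q' r' p'' q'' r''
    have h3 : 8 * u0 + 16 * v0 + 4 * w - 8 * t1 = 0 := by
      have h1 := h
      rw [nrd, hw] at h1
      simp only [emb_two, map_mul, map_ofNat] at h1
      have : 8 * (u0 : L7) + 16 * v0 + 4 * w - 8 * t1 = 0 := by
        rw [← hu0, ← hv0, ← ht1]; linear_combination h1
      exact_mod_cast this
    obtain ⟨⟨p'', rfl⟩, ⟨q'', rfl⟩, ⟨r'', rfl⟩⟩ := hw' (t1 - 2 * v0 - u0) (by omega)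
    have h4 : nrd S (emb p q r) (emb p' q' r') (emb p'' q'' r'') = 0 := by
      rw [nrd] at h ⊢
      simp only [emb_two, map_mul, map_ofNat] at h
      linear_combination h / 8
    obtain ⟨⟨a1, a2, a3⟩, ⟨a4, a5, a6⟩, ⟨a7, a8, a9⟩⟩ := ih _ _ _ _ _ _ _ _ _ h4
    have hd : ∀ x : ℤ, 2 ^ n ∣ x → 2 ^ (n + 1) ∣ 2 * x := by
      intro x hx
      rw [pow_succ, mul_comm]
      exact mul_dvd_mul_left 2 hx
    exact ⟨⟨hd _ a1, hd _ a2, hd _ a3⟩, ⟨hd _ a4, hd _ a5, hd _ a6⟩, ⟨hd _ a7, hd _ a8, hd _ a9⟩⟩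

theorem int_zero (x : ℤ) (h : ∀ n : ℕ, 2 ^ n ∣ x) : x = 0 := by
  by_contra hx
  have h1 := Int.natAbs_dvd_natAbs.mpr (h x.natAbs)
  have h2 := Nat.le_of_dvd (Int.natAbs_pos.mpr hx) h1
  rw [Int.natAbs_pow] at h2
  exact absurd h2 (not_le.mpr (Nat.lt_two_pow_self))

theorem descent_zero (p q r p' q' r' p'' q'' r'' : ℤ)
    (h : nrd S (emb p q r) (emb p' q' r') (emb p'' q'' r'') = 0) :
    (p = 0 ∧ q = 0 ∧ r = 0) ∧ (p' = 0 ∧ q' = 0 ∧ r' = 0) ∧ (p'' = 0 ∧ q'' = 0 ∧ r'' = 0) := by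
  have H := fun n => descent S hS n _ _ _ _ _ _ _ _ _ h
  refine ⟨⟨?_, ?_, ?_⟩, ⟨?_, ?_, ?_⟩, ⟨?_, ?_, ?_⟩⟩ <;> apply int_zero S hS <;> intro n
  · exact (H n).1.1
  · exact (H n).1.2.1
  · exact (H n).1.2.2
  · exact (H n).2.1.1
  · exact (H n).2.1.2.1
  · exact (H n).2.1.2.2
  · exact (H n).2.2.1
  · exact (H n).2.2.2.1
  · exact (H n).2.2.2.2

end

/-- rational coordinates -/
def coord : (ℚ × ℚ × ℚ) →ₗ[ℚ] L7 :=
  LinearMap.coprod (LinearMap.toSpanSingleton ℚ L7 1)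
    (LinearMap.coprod (LinearMap.toSpanSingleton ℚ L7 eta7)
      (LinearMap.toSpanSingleton ℚ L7 (eta7 ^ 2)))

theorem coord_apply (p q r : ℚ) : coord (p, q, r) = p + q * eta7 + r * eta7 ^ 2 := by
  simp [coord, Algebra.smul_def, add_assoc]

theorem coord_surj : Function.Surjective coord := by
  have hint : IsIntegral ℚ (zeta7 + zeta7⁻¹) := by
    refine ⟨Polynomial.X ^ 3 + Polynomial.X ^ 2 - 2 * Polynomial.X - 1, by monicity!, ?_⟩
    have : (zeta7 + zeta7⁻¹) ^ 3 + (zeta7 + zeta7⁻¹) ^ 2 - 2 * (zeta7 + zeta7⁻¹) - 1 = 0 :=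
      congrArg (fun x : L7 => (x : ℂ)) aux_cubic
    simpa using this
  have key : ∀ w : ℂ, w ∈ Algebra.adjoin ℚ {zeta7 + zeta7⁻¹} →
      ∃ p q r : ℚ, w = p + q * (eta7 : ℂ) + r * (eta7 : ℂ) ^ 2 := by
    intro w hw
    have hc : (eta7 : ℂ) ^ 3 + (eta7 : ℂ) ^ 2 - 2 * (eta7 : ℂ) - 1 = 0 :=
      congrArg (fun x : L7 => (x : ℂ)) aux_cubic
    induction hw using Algebra.adjoin_induction with
    | mem x hx =>
      rw [Set.mem_singleton_iff] at hx
      exact ⟨0, 1, 0, by simp [hx, eta7]⟩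
    | algebraMap x => exact ⟨x, 0, 0, by simp⟩
    | add x y hx hy ihx ihy =>
      obtain ⟨p, q, r, rfl⟩ := ihx
      obtain ⟨p', q', r', rfl⟩ := ihy
      exact ⟨p + p', q + q', r + r', by push_cast; ring⟩
    | mul x y hx hy ihx ihy =>
      obtain ⟨p, q, r, rfl⟩ := ihx
      obtain ⟨p', q', r', rfl⟩ := ihy
      refine ⟨p*p' + (q*r'+r*q') - r*r', p*q'+q*p' + 2*(q*r'+r*q') - r*r',
        p*r'+q*q'+r*p' - (q*r'+r*q') + 3*(r*r'), ?_⟩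
      push_cast
      linear_combination ((q:ℂ)*r'+r*q' + r*r'*((eta7 : ℂ)-1)) * hc
  intro z
  have hz : (z : ℂ) ∈ Algebra.adjoin ℚ {zeta7 + zeta7⁻¹} := by
    rw [← IntermediateField.adjoin_simple_toSubalgebra_of_isAlgebraic hint.isAlgebraic]
    exact z.2
  obtain ⟨p, q, r, h⟩ := key _ hz
  refine ⟨(p, q, r), Subtype.ext ?_⟩
  rw [coord_apply, h]
  push_cast
  rfl

theorem clear_den (p q r : ℚ) : ∃ k : ℤ, k ≠ 0 ∧ ∀ m : ℤ, ∃ a b c : ℤ,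
    (m * k : L7) * coord (p, q, r) = emb a b c ∧ (m * k * p = a ∧ m * k * q = b ∧ m * k * r = c) := by
  refine ⟨p.den * q.den * r.den, by simp, fun m => ?_⟩
  have hp := Rat.mul_den_eq_num p
  have hq := Rat.mul_den_eq_num q
  have hr := Rat.mul_den_eq_num r
  have e1 : (m * (p.den * q.den * r.den : ℤ) : ℚ) * p = ((m * p.num * q.den * r.den : ℤ) : ℚ) := by
    push_cast; linear_combination (m * q.den * r.den : ℚ) * hp
  have e2 : (m * (p.den * q.den * r.den : ℤ) : ℚ) * q = ((m * q.num * p.den * r.den : ℤ) : ℚ) := by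
    push_cast; linear_combination (m * p.den * r.den : ℚ) * hq
  have e3 : (m * (p.den * q.den * r.den : ℤ) : ℚ) * r = ((m * r.num * q.den * p.den : ℤ) : ℚ) := by
    push_cast; linear_combination (m * q.den * p.den : ℚ) * hr
  refine ⟨_, _, _, ?_, e1, e2, e3⟩
  have f1 := congrArg (Rat.cast : ℚ → L7) e1
  have f2 := congrArg (Rat.cast : ℚ → L7) e2
  have f3 := congrArg (Rat.cast : ℚ → L7) e3
  rw [coord_apply, emb]
  push_cast at f1 f2 f3 ⊢
  linear_combination f1 + f2 * eta7 + f3 * eta7 ^ 2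

section
variable (S : L7 ≃ₐ[ℚ] L7) (hS : ((S eta7 : L7) : ℂ) = zeta7 ^ 2 + (zeta7 ^ 2)⁻¹)
include hS

theorem coord_zero (x y z : ℚ × ℚ × ℚ) (h : nrd S (coord x) (coord y) (coord z) = 0) :
    x = 0 ∧ y = 0 ∧ z = 0 := by
  obtain ⟨p, q, r⟩ := x
  obtain ⟨p', q', r'⟩ := y
  obtain ⟨p'', q'', r''⟩ := z
  obtain ⟨k, hk, H⟩ := clear_den p q r
  obtain ⟨k', hk', H'⟩ := clear_den p' q' r'
  obtain ⟨k'', hk'', H''⟩ := clear_den p'' q'' r''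
  obtain ⟨a, b, c, e, e1, e2, e3⟩ := H (k' * k'')
  obtain ⟨a', b', c', e', e1', e2', e3'⟩ := H' (k * k'')
  obtain ⟨a'', b'', c'', e'', e1'', e2'', e3''⟩ := H'' (k * k')
  have h0 : nrd S (emb a b c) (emb a' b' c') (emb a'' b'' c'') = 0 := by
    rw [← e, ← e', ← e'']
    rw [nrd] at h ⊢
    simp only [map_mul, map_intCast]
    push_cast
    linear_combination ((k : L7) * k' * k'') ^ 3 * h
  obtain ⟨⟨rfl, rfl, rfl⟩, ⟨rfl, rfl, rfl⟩, ⟨rfl, rfl, rfl⟩⟩ := descent_zero S hS _ _ _ _ _ _ _ _ _ h0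
  simp [hk, hk', hk''] at e1 e2 e3 e1' e2' e3' e1'' e2'' e3''
  simp [*]

theorem nrd_zero (a b c : L7) (h : nrd S a b c = 0) : a = 0 ∧ b = 0 ∧ c = 0 := by
  obtain ⟨x, rfl⟩ := coord_surj a
  obtain ⟨y, rfl⟩ := coord_surj b
  obtain ⟨z, rfl⟩ := coord_surj c
  obtain ⟨rfl, rfl, rfl⟩ := coord_zero S hS x y z h
  simp

theorem coord_inj : Function.Injective coord := by
  rw [← LinearMap.ker_eq_bot, LinearMap.ker_eq_bot']
  intro x hx
  refine (coord_zero S hS x 0 0 ?_).1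
  simp [hx, nrd]

theorem finrank_L7 : Module.finrank ℚ L7 = 3 := by
  rw [← (LinearEquiv.ofBijective coord ⟨coord_inj S hS, coord_surj⟩).finrank_eq]
  simp

end

/-- the general element of the cyclic algebra as a matrix -/
def cyc (S : L7 ≃ₐ[ℚ] L7) : (L7 × L7 × L7) →ₗ[ℚ] Matrix (Fin 3) (Fin 3) L7 where
  toFun v := !![v.1, 2 * S v.2.2, 2 * S (S v.2.1); v.2.1, S v.1, 2 * S (S v.2.2);
    v.2.2, S v.2.1, S (S v.1)]
  map_add' v w := by
    ext i j : 2
    fin_cases i <;> fin_cases j <;> simp [mul_add]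
  map_smul' t v := by
    have h : ∀ x : L7, S (t • x) = t • S x := fun x => by
      first
        | exact S.toLinearMap.map_smul t x
        | exact map_rat_smul S t x
        | rw [Algebra.smul_def, map_mul, S.commutes, ← Algebra.smul_def]
    ext i j : 2
    fin_cases i <;> fin_cases j <;> simp [h, mul_smul_comm]

theorem cyc_apply (S : L7 ≃ₐ[ℚ] L7) (a b c : L7) : cyc S (a, b, c) =
  !![a, 2 * S c, 2 * S (S b); b, S a, 2 * S (S c); c, S b, S (S a)] := rfl

theorem cyc_inj (S : L7 ≃ₐ[ℚ] L7) : Function.Injective (cyc S) := by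
  rintro ⟨a, b, c⟩ ⟨a', b', c'⟩ h
  rw [cyc_apply, cyc_apply] at h
  have h0 := congrFun (congrFun h 0) 0
  have h1 := congrFun (congrFun h 1) 0
  have h2 := congrFun (congrFun h 2) 0
  simp at h0 h1 h2
  simp [*]

theorem cyc_det (S : L7 ≃ₐ[ℚ] L7) (a b c : L7) : (cyc S (a, b, c)).det = nrd S a b c := by
  rw [cyc_apply, Matrix.det_fin_three, nrd]
  simp
  ring

theorem cyc_mul (S : L7 ≃ₐ[ℚ] L7) (h3 : ∀ z, S (S (S z)) = z) (a b c a' b' c' : L7) :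
    cyc S (a, b, c) * cyc S (a', b', c') =
      cyc S (a * a' + 2 * S c * b' + 2 * S (S b) * c', b * a' + S a * b' + 2 * S (S c) * c',
        c * a' + S b * b' + S (S a) * c') := by
  simp only [cyc_apply, map_add, map_mul, map_ofNat, h3]
  rw [← Matrix.ext_iff]
  simp only [Fin.forall_fin_succ, Matrix.mul_apply, Fin.sum_univ_three]
  simp
  generalize S (S a) = x1, S (S b) = x2, S (S c) = x3, S a = x4, S b = x5, S c = x6,
    S (S a') = x7, S (S b') = x8, S (S c') = x9, S a' = x10, S b' = x11, S c' = x12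
  refine ⟨⟨?_, ?_⟩, ⟨?_, ?_⟩, ?_, ?_⟩ <;> ring

/-- the cyclic algebra -/
def cycAlg (S : L7 ≃ₐ[ℚ] L7) (h3 : ∀ z, S (S (S z)) = z) :
    Subalgebra ℚ (Matrix (Fin 3) (Fin 3) L7) :=
  (LinearMap.range (cyc S)).toSubalgebra
    ⟨(1, 0, 0), by rw [cyc_apply]; ext i j : 2; fin_cases i <;> fin_cases j <;> simp⟩
    (by
      rintro _ _ ⟨⟨a, b, c⟩, rfl⟩ ⟨⟨a', b', c'⟩, rfl⟩
      exact ⟨_, (cyc_mul S h3 a b c a' b' c').symm⟩)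

theorem adjoin_eq (S : L7 ≃ₐ[ℚ] L7) (h3 : ∀ z, S (S (S z)) = z)
    (U : Matrix (Fin 3) (Fin 3) L7)
    (hU : ∀ i j : Fin 3, U i j =
      if (i : ℕ) = (j : ℕ) + 1 then 1
      else if (i : ℕ) = 0 ∧ (j : ℕ) = 2 then 2 else 0)
    (D : L7 → Matrix (Fin 3) (Fin 3) L7)
    (hD : ∀ z : L7, D z = Matrix.diagonal fun i : Fin 3 => (S ^ (i : ℕ)) z) :
    Algebra.adjoin ℚ ({U} ∪ Set.range D) = cycAlg S h3 := by
  have eU : U = cyc S (0, 1, 0) := by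
    rw [cyc_apply]
    ext i j : 2
    rw [hU]
    fin_cases i <;> fin_cases j <;> simp
  have eD : ∀ z, D z = cyc S (z, 0, 0) := by
    intro z
    rw [cyc_apply, hD]
    ext i j : 2
    fin_cases i <;> fin_cases j <;> simp [pow_two]
  apply le_antisymm
  · apply Algebra.adjoin_le
    rintro x (hx | ⟨z, rfl⟩)
    · rw [Set.mem_singleton_iff] at hx
      rw [hx, eU]
      exact ⟨_, rfl⟩
    · rw [eD]
      exact ⟨_, rfl⟩
  · rintro _ ⟨⟨a, b, c⟩, rfl⟩
    have : cyc S (a, b, c) = D a + U * D b + U * U * D c := by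
      rw [eD, eD, eD, eU, cyc_mul S h3, cyc_mul S h3, cyc_mul S h3, ← map_add, ← map_add]
      simp
    rw [this]
    have hu : U ∈ Algebra.adjoin ℚ ({U} ∪ Set.range D) := Algebra.subset_adjoin (Or.inl rfl)
    have hd : ∀ z, D z ∈ Algebra.adjoin ℚ ({U} ∪ Set.range D) :=
      fun z => Algebra.subset_adjoin (Or.inr ⟨z, rfl⟩)
    exact add_mem (add_mem (hd a) (mul_mem hu (hd b))) (mul_mem (mul_mem hu hu) (hd c))

/-- With `S` the generator of the Galois group of
`L = ℚ(ζ₇ + ζ₇⁻¹)` over `ℚ` (sending `ζ₇ + ζ₇⁻¹` to `ζ₇² + ζ₇⁻²`), `D(z) =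
diag(z, S(z), S²(z))` and `U` the matrix with `U_{2,1} = U_{3,2} = 1`, `U_{1,3} = 2`
(so `U³ = 2·I`, `D(z)U = U·D(S(z))`), the `ℚ`-subalgebra of `M₃(L)` generated by `U`
and all `D(z)` is a division ring of dimension `9` over `ℚ`. -/
theorem cyclic_algebra_sigma_two_division_ring
    (S : L7 ≃ₐ[ℚ] L7)
    (hS : ((S eta7 : L7) : ℂ) = zeta7 ^ 2 + (zeta7 ^ 2)⁻¹)
    (U : Matrix (Fin 3) (Fin 3) L7)
    (hU : ∀ i j : Fin 3, U i j =
      if (i : ℕ) = (j : ℕ) + 1 then 1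
      else if (i : ℕ) = 0 ∧ (j : ℕ) = 2 then 2 else 0)
    (D : L7 → Matrix (Fin 3) (Fin 3) L7)
    (hD : ∀ z : L7, D z = Matrix.diagonal fun i : Fin 3 => (S ^ (i : ℕ)) z) :
    (∀ x : Algebra.adjoin ℚ ({U} ∪ Set.range D), x ≠ 0 → IsUnit x) ∧
    Module.finrank ℚ (Algebra.adjoin ℚ ({U} ∪ Set.range D)) = 9 := by
  have h3 := aux_S3 S hS
  rw [adjoin_eq S h3 U hU D hD]
  have hL := finrank_L7 S hS
  have hfL : FiniteDimensional ℚ L7 := Module.finite_of_finrank_pos (by omega)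
  let e : (L7 × L7 × L7) ≃ₗ[ℚ] cycAlg S h3 := LinearEquiv.ofInjective (cyc S) (cyc_inj S)
  have hf : FiniteDimensional ℚ (cycAlg S h3) := Module.Finite.equiv e
  refine ⟨?_, ?_⟩
  · rintro ⟨x, hx⟩ hx0
    obtain ⟨⟨a, b, c⟩, rfl⟩ := id hx
    have hdet : IsUnit (cyc S (a, b, c)).det := by
      rw [isUnit_iff_ne_zero, cyc_det]
      intro h
      obtain ⟨rfl, rfl, rfl⟩ := nrd_zero S hS a b c h
      exact hx0 (Subtype.ext (map_zero (cyc S)))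
    have hu : IsUnit (cyc S (a, b, c)) := (Matrix.isUnit_iff_isUnit_det _).mpr hdet
    have hinj : Function.Injective (LinearMap.mulLeft ℚ (⟨cyc S (a, b, c), hx⟩ : cycAlg S h3)) := by
      intro y z hyz
      exact Subtype.ext (hu.mul_left_cancel (congrArg Subtype.val hyz))
    obtain ⟨y, hy⟩ := LinearMap.injective_iff_surjective.mp hinj 1
    have hy1 : cyc S (a, b, c) * y.1 = 1 := congrArg Subtype.val hy
    exact ⟨⟨⟨cyc S (a, b, c), hx⟩, y, hy, Subtype.ext (mul_eq_one_comm.mp hy1)⟩, rfl⟩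
  · rw [← e.finrank_eq]
    simp [hL]

end
end
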